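/- Let n ≥ 2, let 1 < p < n, r, q ≥ 1, let β, γ be real and 0 < a ≤ 1 satisfy 1/r + γ/n = a(1/p - 1/n) + (1-a)(1/q + β/n), and let 1 ≤ q₁, q₂, q₃ ≤ ∞ satisfy 1/q₁ = a/q₂ + (1-a)/q₃. Set δ = -γ + (1-a)β and assume 0 ≤ δ ≤ a. Then there exists a constant C > 0 such that for every smooth compactly supported f : ℝⁿ → ℝ, ‖ |x|^{γ} f ‖_{r,q₁} ≤ C ‖ |∇f| ‖_{p,q₂}^{a} · ‖ |x|^{β} f ‖_{q,q₃}^{1-a}. -/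

import Mathlib

open MeasureTheory Set ENNReal

/-- The distribution function `μ_f(λ) = μ{x : |f x| > λ}` of a function. -/
noncomputable def distribFn {α : Type*} [MeasurableSpace α] (μ : Measure α)
    (f : α → ℝ) (l : ℝ≥0∞) : ℝ≥0∞ :=
  μ {x | l < ENNReal.ofReal |f x|}

/-- The decreasing rearrangement `f*(t) = inf {λ > 0 : μ_f(λ) ≤ t}`. -/
noncomputable def rearr {α : Type*} [MeasurableSpace α] (μ : Measure α)
    (f : α → ℝ) (t : ℝ) : ℝ≥0∞ :=
  sInf {l : ℝ≥0∞ | 0 < l ∧ distribFn μ f l ≤ ENNReal.ofReal t}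

/-- The Lorentz `L^{p,q}` (quasi)norm
`‖f‖_{p,q} = (∫₀^∞ (t^{1/p} f*(t))^q dt/t)^{1/q}` for `q < ∞`, and
`‖f‖_{p,∞} = sup_{t>0} t^{1/p} f*(t)`. -/
noncomputable def lorentz {α : Type*} [MeasurableSpace α] (μ : Measure α)
    (p q : ℝ≥0∞) (f : α → ℝ) : ℝ≥0∞ :=
  if q = ∞ then ⨆ t ∈ Ioi (0 : ℝ), ENNReal.ofReal t ^ p.toReal⁻¹ * rearr μ f t
  else (∫⁻ t in Ioi (0 : ℝ),
      (ENNReal.ofReal t ^ p.toReal⁻¹ * rearr μ f t) ^ q.toReal / ENNReal.ofReal t) ^ q.toReal⁻¹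

/-!
Cutting `f` at the levels `f*(2t) < f*(t)` and applying the `L¹` Sobolev inequality to the part of
`f` between them gives `f*(t) ≤ f*(2t) + C t^{1/n} A(t)`, with `A` a dyadic average of `|∇f|*`.
Iterating in `t` and using the scale invariance of `dt/t` yields the Lorentz–Sobolev inequality
`‖f‖_{s,q₂} ≤ C ‖∇f‖_{p,q₂}`, `1/s = 1/p - 1/n`. Since
`|x|^γ |f| = |x|^{-δ} |f|^a (|x|^β |f|)^{1-a}` and `|x|^{-δ}` lies in `L^{n/δ,∞}`, Hölder's
inequality in Lorentz spaces concludes.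
-/

section Exponents

variable {α : Type*} [MeasurableSpace α] {μ : Measure α}

theorem eLpNorm_tsum_le {f : ℕ → α → ℝ≥0∞} (hf : ∀ i, Measurable (f i)) {q : ℝ≥0∞}
    (hq : 1 ≤ q) : eLpNorm (fun x => ∑' i, f i x) q μ ≤ ∑' i, eLpNorm (f i) q μ := by
  rcases eq_or_ne q ∞ with rfl | hq_top
  · simp only [eLpNorm_exponent_top]
    refine essSup_le_of_ae_le _ ?_
    filter_upwards [ae_all_iff.2 fun i => enorm_ae_le_eLpNormEssSup (f i) μ] with x hx
    exact ENNReal.tsum_le_tsum hx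
  have hq_pos : 0 < q.toReal := ENNReal.toReal_pos (zero_lt_one.trans_le hq).ne' hq_top
  rw [eLpNorm_eq_lintegral_rpow_enorm_toReal (zero_lt_one.trans_le hq).ne' hq_top, one_div,
    ENNReal.rpow_inv_le_iff hq_pos]
  have partialSum_mono (x : α) : Monotone fun k => ∑ i ∈ Finset.range k, f i x :=
    fun _ _ hkl => Finset.sum_le_sum_of_subset (Finset.range_mono hkl)
  calc ∫⁻ x, ‖∑' i, f i x‖ₑ ^ q.toReal ∂μ
      = ∫⁻ x, ⨆ k, (∑ i ∈ Finset.range k, f i x) ^ q.toReal ∂μ := by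
        refine lintegral_congr fun x => ?_
        rw [enorm_eq_self, ENNReal.tsum_eq_iSup_nat]
        exact (ENNReal.orderIsoRpow _ hq_pos).map_iSup _
    _ = ⨆ k, ∫⁻ x, (∑ i ∈ Finset.range k, f i x) ^ q.toReal ∂μ :=
        lintegral_iSup (fun k => by fun_prop)
          fun _ _ hkl x => ENNReal.rpow_le_rpow (partialSum_mono x hkl) hq_pos.le
    _ ≤ (∑' i, eLpNorm (f i) q μ) ^ q.toReal := by
        refine iSup_le fun k => ?_
        rw [← ENNReal.rpow_inv_le_iff hq_pos]
        calc (∫⁻ x, (∑ i ∈ Finset.range k, f i x) ^ q.toReal ∂μ) ^ q.toReal⁻¹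
            = eLpNorm (∑ i ∈ Finset.range k, f i) q μ := by
              simp [eLpNorm_eq_lintegral_rpow_enorm_toReal (zero_lt_one.trans_le hq).ne' hq_top]
          _ ≤ ∑ i ∈ Finset.range k, eLpNorm (f i) q μ :=
              eLpNorm_sum_le (fun i _ => (hf i).aestronglyMeasurable) hq
          _ ≤ ∑' i, eLpNorm (f i) q μ := ENNReal.sum_le_tsum _

theorem eLpNorm_mul_const_le {f : α → ℝ≥0∞} (hf : AEMeasurable f μ) (q c : ℝ≥0∞) :
    eLpNorm (fun x => f x * c) q μ ≤ eLpNorm f q μ * c := by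
  rcases eq_or_ne q 0 with rfl | hq
  · simp
  rcases eq_or_ne q ∞ with rfl | hq_top
  · refine essSup_le_of_ae_le _ ?_
    filter_upwards [enorm_ae_le_eLpNormEssSup f μ] with x hx
    exact mul_le_mul_left hx c
  have hq_pos : 0 < q.toReal := ENNReal.toReal_pos hq hq_top
  simp only [eLpNorm_eq_lintegral_rpow_enorm_toReal hq hq_top, enorm_eq_self, one_div,
    ENNReal.mul_rpow_of_nonneg _ _ hq_pos.le]
  rw [lintegral_mul_const'' _ (hf.pow_const _),
    ENNReal.mul_rpow_of_nonneg _ _ (inv_pos.2 hq_pos).le, ENNReal.rpow_rpow_inv hq_pos.ne']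

theorem eLpNorm_mul_le_eLpNorm_mul_eLpNorm_top {f : α → ℝ≥0∞} (hf : AEMeasurable f μ)
    (g : α → ℝ≥0∞) (q : ℝ≥0∞) : eLpNorm (f * g) q μ ≤ eLpNorm f q μ * eLpNorm g ∞ μ := by
  refine (eLpNorm_mono_enorm_ae ?_).trans (eLpNorm_mul_const_le hf q (eLpNorm g ∞ μ))
  filter_upwards [enorm_ae_le_eLpNormEssSup g μ] with x hx
  exact mul_le_mul_right hx (f x)

theorem eLpNorm_mul_le {f g : α → ℝ≥0∞} (hf : AEMeasurable f μ) (hg : AEMeasurable g μ)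
    (p q r : ℝ≥0∞) [hpqr : HolderTriple p q r] :
    eLpNorm (f * g) r μ ≤ eLpNorm f p μ * eLpNorm g q μ := by
  have inv_eq := hpqr.inv_eq
  rcases ENNReal.trichotomy p with rfl | rfl | hp
  · simp_all
  · obtain rfl : r = q := by simpa using inv_eq
    rw [mul_comm f, mul_comm (eLpNorm f _ μ)]
    exact eLpNorm_mul_le_eLpNorm_mul_eLpNorm_top hg f r
  rcases ENNReal.trichotomy q with rfl | rfl | hq
  · simp_all
  · obtain rfl : r = p := by simpa using inv_eq
    exact eLpNorm_mul_le_eLpNorm_mul_eLpNorm_top hf g r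
  obtain ⟨hp₀, hp_top⟩ := ENNReal.toReal_pos_iff.1 hp
  obtain ⟨hq₀, hq_top⟩ := ENNReal.toReal_pos_iff.1 hq
  have inv_toReal_eq : 1 / r.toReal = 1 / p.toReal + 1 / q.toReal := by
    simpa [ENNReal.toReal_add, hp₀.ne', hq₀.ne'] using congrArg ENNReal.toReal inv_eq
  have hr : 0 < r.toReal := one_div_pos.1 (by rw [inv_toReal_eq]; positivity)
  obtain ⟨hr₀, hr_top⟩ := ENNReal.toReal_pos_iff.1 hr
  have hrp : r.toReal < p.toReal :=
    lt_of_one_div_lt_one_div hp (inv_toReal_eq ▸ lt_add_of_pos_right _ (by positivity))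
  simpa [eLpNorm_eq_lintegral_rpow_enorm_toReal, hp₀.ne', hq₀.ne', hr₀.ne', hp_top.ne, hq_top.ne,
    hr_top.ne] using ENNReal.lintegral_Lp_mul_le_Lq_mul_Lr hr hrp inv_toReal_eq μ hf hg

end Exponents

section DilationMeasure

/-- The measure `dt/t` on the half-line `(0, ∞)`, extended by zero to `ℝ`. It is invariant under
dilations, and Lorentz norms are weighted `L^q` norms with respect to it. -/
noncomputable def dilationMeasure : Measure ℝ :=
  (volume.restrict (Ioi 0)).withDensity fun t => (ENNReal.ofReal t)⁻¹

theorem lintegral_dilationMeasure (F : ℝ → ℝ≥0∞) :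
    ∫⁻ t, F t ∂dilationMeasure = ∫⁻ t in Ioi (0 : ℝ), F t / ENNReal.ofReal t := by
  rw [dilationMeasure, lintegral_withDensity_eq_lintegral_mul_non_measurable _ (by fun_prop)]
  · simp [div_eq_mul_inv, mul_comm]
  · filter_upwards [self_mem_ae_restrict measurableSet_Ioi] with t ht
    simpa using ht

theorem ae_dilationMeasure_iff {P : ℝ → Prop} :
    (∀ᵐ t ∂dilationMeasure, P t) ↔ ∀ᵐ t, 0 < t → P t := by
  rw [dilationMeasure, ae_withDensity_iff (by fun_prop), ae_restrict_iff' measurableSet_Ioi]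
  simp

theorem measurePreserving_const_mul_dilationMeasure {c : ℝ} (hc : 0 < c) :
    MeasurePreserving (c * ·) dilationMeasure dilationMeasure := by
  refine ⟨by fun_prop, Measure.ext_of_lintegral _ fun F hF => ?_⟩
  have change_of_variables := lintegral_image_eq_lintegral_abs_deriv_mul
    (measurableSet_Ioi (a := 0)) (fun t _ => ((hasDerivAt_id t).const_mul c).hasDerivWithinAt)
    (mul_right_injective₀ hc.ne').injOn fun t => F t / ENNReal.ofReal t
  rw [lintegral_map hF (by fun_prop), lintegral_dilationMeasure, lintegral_dilationMeasure]
  simp only [id_eq, image_mul_left_Ioi hc, mul_zero, mul_one, abs_of_pos hc] at change_of_variables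
  rw [change_of_variables]
  refine setLIntegral_congr_fun measurableSet_Ioi fun t _ => ?_
  rw [ENNReal.ofReal_mul hc.le, ← mul_div_assoc,
    ENNReal.mul_div_mul_left _ _ (by simpa using hc) ENNReal.ofReal_ne_top]

theorem eLpNorm_comp_const_mul {c : ℝ} (hc : 0 < c) {F : ℝ → ℝ≥0∞} (hF : Measurable F)
    (q : ℝ≥0∞) :
    eLpNorm (fun t => F (c * t)) q dilationMeasure = eLpNorm F q dilationMeasure :=
  eLpNorm_comp_measurePreserving hF.aestronglyMeasurable
    (measurePreserving_const_mul_dilationMeasure hc)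

theorem eLpNorm_rpow_mul_tsum_dilation_le {q : ℝ≥0∞} (hq : 1 ≤ q) {ρ : ℝ} (hρ : 0 < ρ) (b s : ℝ)
    {G : ℝ → ℝ≥0∞} (hG : Measurable G) :
    eLpNorm (fun t => ENNReal.ofReal t ^ s * ∑' k, ENNReal.ofReal b ^ k * G (ρ ^ k * t)) q
        dilationMeasure ≤
      (1 - ENNReal.ofReal (b * ρ ^ (-s)))⁻¹ *
        eLpNorm (fun t => ENNReal.ofReal t ^ s * G t) q dilationMeasure := by
  set W : ℝ → ℝ≥0∞ := fun t => ENNReal.ofReal t ^ s * G t with hW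
  have hW_meas : Measurable W := by fun_prop
  have term_eq (k : ℕ) {t : ℝ} (ht : 0 < t) :
      ENNReal.ofReal t ^ s * (ENNReal.ofReal b ^ k * G (ρ ^ k * t)) =
        ENNReal.ofReal (b * ρ ^ (-s)) ^ k * W (ρ ^ k * t) := by
    have rpow_scale : ENNReal.ofReal (ρ ^ (-s)) ^ k * ENNReal.ofReal (ρ ^ k * t) ^ s =
        ENNReal.ofReal t ^ s := by
      rw [← ENNReal.ofReal_pow (by positivity), ENNReal.ofReal_rpow_of_pos (by positivity),
        ENNReal.ofReal_rpow_of_pos ht, ← ENNReal.ofReal_mul (by positivity),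
        Real.mul_rpow (by positivity) ht.le, ← mul_assoc, ← Real.rpow_natCast_mul hρ.le,
        ← Real.rpow_mul_natCast hρ.le, ← Real.rpow_add hρ]
      simp [mul_comm]
    rw [hW, ENNReal.ofReal_mul' (by positivity), mul_pow, ← rpow_scale]
    ring
  calc _ = eLpNorm (fun t => ∑' k, ENNReal.ofReal (b * ρ ^ (-s)) ^ k * W (ρ ^ k * t)) q
        dilationMeasure := by
        refine eLpNorm_congr_ae (ae_dilationMeasure_iff.2 (.of_forall fun t ht => ?_))
        simp only [← ENNReal.tsum_mul_left, term_eq _ ht]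
    _ ≤ ∑' k, eLpNorm (fun t => ENNReal.ofReal (b * ρ ^ (-s)) ^ k * W (ρ ^ k * t)) q
        dilationMeasure := eLpNorm_tsum_le (fun k => by fun_prop) hq
    _ ≤ ∑' k, ENNReal.ofReal (b * ρ ^ (-s)) ^ k * eLpNorm W q dilationMeasure := by
        refine ENNReal.tsum_le_tsum fun k => ?_
        rw [← eLpNorm_comp_const_mul (pow_pos hρ k) hW_meas q]
        simp only [mul_comm (ENNReal.ofReal (b * ρ ^ (-s)) ^ k)]
        exact eLpNorm_mul_const_le (by fun_prop) q _
    _ = _ := by rw [ENNReal.tsum_mul_right, ENNReal.tsum_geometric]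

end DilationMeasure

section Rearrangement

variable {α : Type*} [MeasurableSpace α] {μ : Measure α} {f g : α → ℝ}

theorem distribFn_antitone : Antitone (distribFn μ f) := fun _ _ hlm =>
  measure_mono fun _ hx => hlm.trans_lt hx

theorem rearr_le_of_distribFn_le {l : ℝ≥0∞} {t : ℝ} (h : distribFn μ f l ≤ ENNReal.ofReal t) :
    rearr μ f t ≤ l :=
  le_of_forall_gt_imp_ge_of_dense fun _ hlm =>
    sInf_le ⟨zero_le.trans_lt hlm, (distribFn_antitone hlm.le).trans h⟩

theorem distribFn_rearr_le (t : ℝ) : distribFn μ f (rearr μ f t) ≤ ENNReal.ofReal t := by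
  obtain ⟨u, u_anti, u_tendsto, u_mem⟩ := exists_seq_tendsto_sInf
    (S := {l : ℝ≥0∞ | 0 < l ∧ distribFn μ f l ≤ ENNReal.ofReal t})
    ⟨∞, by simp [distribFn]⟩ (OrderBot.bddBelow _)
  have superlevel_subset :
      {x | rearr μ f t < ENNReal.ofReal |f x|} ⊆ ⋃ k, {x | u k < ENNReal.ofReal |f x|} :=
    fun x hx => mem_iUnion.2 (u_tendsto.eventually_lt_const hx).exists
  have superlevel_mono : Monotone fun k => {x | u k < ENNReal.ofReal |f x|} :=
    fun _ _ hij _ hx => (u_anti hij).trans_lt hx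
  calc distribFn μ f (rearr μ f t) ≤ μ (⋃ k, {x | u k < ENNReal.ofReal |f x|}) :=
        measure_mono superlevel_subset
    _ = ⨆ k, distribFn μ f (u k) := superlevel_mono.measure_iUnion
    _ ≤ ENNReal.ofReal t := iSup_le fun k => (u_mem k).2

theorem lt_distribFn_of_lt_rearr {l : ℝ≥0∞} {t : ℝ} (h : l < rearr μ f t) :
    ENNReal.ofReal t < distribFn μ f l :=
  not_le.1 fun hl => (rearr_le_of_distribFn_le hl).not_gt h

theorem rearr_antitone : Antitone (rearr μ f) := fun _ _ hst =>
  rearr_le_of_distribFn_le ((distribFn_rearr_le _).trans (ENNReal.ofReal_le_ofReal hst))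

@[fun_prop]
theorem measurable_rearr : Measurable (rearr μ f) := rearr_antitone.measurable

theorem rearr_mono_ae (h : ∀ᵐ x ∂μ, |f x| ≤ |g x|) (t : ℝ) : rearr μ f t ≤ rearr μ g t := by
  refine rearr_le_of_distribFn_le ((measure_mono_ae ?_).trans (distribFn_rearr_le (f := g) t))
  filter_upwards [h] with x hx hlt
  exact hlt.trans_le (ENNReal.ofReal_le_ofReal hx)

theorem rearr_mul_le {s t : ℝ} (hs : 0 ≤ s) (ht : 0 ≤ t) :
    rearr μ (f * g) (s + t) ≤ rearr μ f s * rearr μ g t := by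
  refine rearr_le_of_distribFn_le ?_
  have superlevel_subset : {x | rearr μ f s * rearr μ g t < ENNReal.ofReal |(f * g) x|} ⊆
      {x | rearr μ f s < ENNReal.ofReal |f x|} ∪ {x | rearr μ g t < ENNReal.ofReal |g x|} := by
    intro x hx
    by_contra! hx_notMem
    simp only [mem_union, mem_ofPred_eq, not_or, not_lt] at hx_notMem
    rw [mem_ofPred_eq, Pi.mul_apply, abs_mul, ENNReal.ofReal_mul (abs_nonneg _)] at hx
    exact (mul_le_mul' hx_notMem.1 hx_notMem.2).not_gt hx
  calc distribFn μ (f * g) (rearr μ f s * rearr μ g t)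
      ≤ distribFn μ f (rearr μ f s) + distribFn μ g (rearr μ g t) :=
        (measure_mono superlevel_subset).trans (measure_union_le _ _)
    _ ≤ ENNReal.ofReal s + ENNReal.ofReal t :=
        add_le_add (distribFn_rearr_le s) (distribFn_rearr_le t)
    _ = ENNReal.ofReal (s + t) := (ENNReal.ofReal_add hs ht).symm

theorem rearr_rpow_le {a : ℝ} (ha : 0 ≤ a) (t : ℝ) :
    rearr μ (fun x => |f x| ^ a) t ≤ rearr μ f t ^ a := by
  refine rearr_le_of_distribFn_le
    ((measure_mono fun x hx => ?_).trans (distribFn_rearr_le (f := f) t))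
  rw [mem_ofPred_eq, abs_of_nonneg (by positivity),
    ← ENNReal.ofReal_rpow_of_nonneg (abs_nonneg _) ha] at hx
  exact lt_of_not_ge fun hle => (ENNReal.rpow_le_rpow hle ha).not_gt hx

end Rearrangement

section Lorentz

theorem rpow_mul_le_of_ae_of_antitone {F : ℝ → ℝ≥0∞} (hF : Antitone F) {s : ℝ} {c : ℝ≥0∞}
    (h : ∀ᵐ u, 0 < u → ENNReal.ofReal u ^ s * F u ≤ c) {t : ℝ} (ht : 0 < t) :
    ENNReal.ofReal t ^ s * F t ≤ c := by
  by_contra! hlt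
  have tendsto_left : Filter.Tendsto (fun u => ENNReal.ofReal u ^ s * F t) (nhdsWithin t (Iio t))
      (nhds (ENNReal.ofReal t ^ s * F t)) := by
    refine ENNReal.Tendsto.mul_const (Filter.Tendsto.mono_left ?_ nhdsWithin_le_nhds) (.inl ?_)
    · exact (ENNReal.continuous_rpow_const.comp ENNReal.continuous_ofReal).tendsto t
    · exact (ENNReal.rpow_pos (ENNReal.ofReal_pos.2 ht) ENNReal.ofReal_ne_top).ne'
  obtain ⟨l, hl, gt_on_Ioo⟩ :=
    (mem_nhdsLT_iff_exists_Ioo_subset' ht).1 (tendsto_left.eventually_const_lt hlt)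
  obtain ⟨u, hu, hu_le⟩ := (Measure.dense_of_ae h).inter_open_nonempty (Ioo (max l 0) t) isOpen_Ioo
    (nonempty_Ioo.2 (max_lt hl ht))
  obtain ⟨hlu, h0u⟩ := max_lt_iff.1 hu.1
  exact ((hu_le h0u).trans_lt (gt_on_Ioo ⟨hlu, hu.2⟩)).not_ge
    (mul_le_mul_right (hF hu.2.le) _)

variable {α : Type*} [MeasurableSpace α] {μ : Measure α} {f g : α → ℝ} {p q : ℝ≥0∞}

theorem lorentz_eq_eLpNorm (hq : q ≠ 0) :
    lorentz μ p q f =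
      eLpNorm (fun t => ENNReal.ofReal t ^ p.toReal⁻¹ * rearr μ f t) q dilationMeasure := by
  rcases eq_or_ne q ∞ with rfl | hq_top
  · rw [lorentz, if_pos rfl, eLpNorm_exponent_top]
    refine le_antisymm (iSup₂_le fun t ht => ?_) (essSup_le_of_ae_le _ ?_)
    · exact rpow_mul_le_of_ae_of_antitone rearr_antitone
        (ae_dilationMeasure_iff.1 (enorm_ae_le_eLpNormEssSup _ _)) ht
    · exact ae_dilationMeasure_iff.2 (.of_forall fun t ht =>
        le_iSup₂ (f := fun t (_ : t ∈ Ioi (0 : ℝ)) => ENNReal.ofReal t ^ p.toReal⁻¹ * rearr μ f t)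
          t ht)
  · rw [lorentz, if_neg hq_top, eLpNorm_eq_lintegral_rpow_enorm_toReal hq hq_top,
      lintegral_dilationMeasure, one_div]
    rfl

theorem lorentz_mono_ae (p q : ℝ≥0∞) (h : ∀ᵐ x ∂μ, |f x| ≤ |g x|) :
    lorentz μ p q f ≤ lorentz μ p q g := by
  unfold lorentz
  split_ifs <;> gcongr <;> exact rearr_mono_ae h _

theorem lorentz_rpow_le {a : ℝ} (ha : 0 ≤ a) (hq : q ≠ 0) :
    lorentz μ (p / ENNReal.ofReal a) (q / ENNReal.ofReal a) (fun x => |f x| ^ a) ≤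
      lorentz μ p q f ^ a := by
  have hq_div : q / ENNReal.ofReal a ≠ 0 := ENNReal.div_ne_zero.2 ⟨hq, ENNReal.ofReal_ne_top⟩
  have weighted_le (t : ℝ) :
      ENNReal.ofReal t ^ (p / ENNReal.ofReal a).toReal⁻¹ * rearr μ (fun x => |f x| ^ a) t ≤
        (ENNReal.ofReal t ^ p.toReal⁻¹ * rearr μ f t) ^ a := by
    rw [ENNReal.toReal_div, ENNReal.toReal_ofReal ha, inv_div, div_eq_inv_mul,
      ENNReal.mul_rpow_of_nonneg _ _ ha, ← ENNReal.rpow_mul]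
    gcongr
    exact rearr_rpow_le ha t
  rw [lorentz_eq_eLpNorm hq_div, lorentz_eq_eLpNorm hq]
  refine (eLpNorm_mono_enorm (g := fun t => (ENNReal.ofReal t ^ p.toReal⁻¹ * rearr μ f t) ^ a)
    weighted_le).trans ?_
  rcases ha.eq_or_lt with rfl | ha_pos
  · rw [ENNReal.ofReal_zero, ENNReal.div_zero hq, eLpNorm_exponent_top]
    exact essSup_le_of_ae_le _ (.of_forall fun t => by simp)
  · have := eLpNorm_enorm_rpow (p := q / ENNReal.ofReal a) (μ := dilationMeasure)
      (fun t => ENNReal.ofReal t ^ p.toReal⁻¹ * rearr μ f t) ha_pos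
    simp only [enorm_eq_self] at this
    rw [this, ENNReal.div_mul_cancel (by simpa) ENNReal.ofReal_ne_top]

theorem toReal_inv_holderTriple (p₁ p₂ : ℝ≥0∞) [hp₁₂ : HolderTriple p₁ p₂ p] (hp : p ≠ 0) :
    p.toReal⁻¹ = p₁.toReal⁻¹ + p₂.toReal⁻¹ := by
  have hp_inv : p₁⁻¹ + p₂⁻¹ ≠ ∞ := by rw [← hp₁₂.inv_eq]; exact ENNReal.inv_ne_top.2 hp
  rw [← ENNReal.toReal_inv, hp₁₂.inv_eq, ENNReal.toReal_add (ENNReal.add_ne_top.1 hp_inv).1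
    (ENNReal.add_ne_top.1 hp_inv).2, ENNReal.toReal_inv, ENNReal.toReal_inv]

theorem lorentz_mul_le (p₁ p₂ q₁ q₂ : ℝ≥0∞) [HolderTriple p₁ p₂ p] [hq₁₂ : HolderTriple q₁ q₂ q]
    (hp : p ≠ 0) (hq : q ≠ 0) :
    lorentz μ p q (f * g) ≤ 2 ^ p.toReal⁻¹ * (lorentz μ p₁ q₁ f * lorentz μ p₂ q₂ g) := by
  have hq₁ : q₁ ≠ 0 := by rintro rfl; simpa [hq] using hq₁₂.inv_eq
  have hq₂ : q₂ ≠ 0 := by rintro rfl; simpa [hq] using hq₁₂.inv_eq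
  set F : ℝ → ℝ≥0∞ := fun t => ENNReal.ofReal t ^ p₁.toReal⁻¹ * rearr μ f t with hF
  set G : ℝ → ℝ≥0∞ := fun t => ENNReal.ofReal t ^ p₂.toReal⁻¹ * rearr μ g t with hG
  have hF_meas : Measurable F := by fun_prop
  have hG_meas : Measurable G := by fun_prop
  have weighted_le {t : ℝ} (ht : 0 < t) :
      ENNReal.ofReal t ^ p.toReal⁻¹ * rearr μ (f * g) t ≤
        (F * G) (1 / 2 * t) * 2 ^ p.toReal⁻¹ := by
    calc ENNReal.ofReal t ^ p.toReal⁻¹ * rearr μ (f * g) t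
        = (ENNReal.ofReal (1 / 2 * t) * 2) ^ p.toReal⁻¹ *
            rearr μ (f * g) (1 / 2 * t + 1 / 2 * t) := by
          rw [← ENNReal.ofReal_ofNat 2, ← ENNReal.ofReal_mul (by positivity)]
          ring_nf
      _ ≤ (ENNReal.ofReal (1 / 2 * t) * 2) ^ p.toReal⁻¹ *
            (rearr μ f (1 / 2 * t) * rearr μ g (1 / 2 * t)) := by
          gcongr
          exact rearr_mul_le (by positivity) (by positivity)
      _ = (F * G) (1 / 2 * t) * 2 ^ p.toReal⁻¹ := by
          rw [ENNReal.mul_rpow_of_nonneg _ _ (by positivity), toReal_inv_holderTriple p₁ p₂ hp,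
            ENNReal.rpow_add_of_nonneg _ _ (by positivity) (by positivity), Pi.mul_apply, hF, hG]
          ring
  rw [lorentz_eq_eLpNorm hq, lorentz_eq_eLpNorm hq₁, lorentz_eq_eLpNorm hq₂]
  calc _ ≤ eLpNorm (fun t => (F * G) (1 / 2 * t) * 2 ^ p.toReal⁻¹) q dilationMeasure :=
        eLpNorm_mono_enorm_ae (ae_dilationMeasure_iff.2 (.of_forall fun t ht => weighted_le ht))
    _ ≤ eLpNorm (fun t => (F * G) (1 / 2 * t)) q dilationMeasure * 2 ^ p.toReal⁻¹ :=
        eLpNorm_mul_const_le (by fun_prop) q _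
    _ ≤ 2 ^ p.toReal⁻¹ * (eLpNorm F q₁ dilationMeasure * eLpNorm G q₂ dilationMeasure) := by
        rw [eLpNorm_comp_const_mul (by positivity) (by fun_prop), mul_comm]
        gcongr
        exact eLpNorm_mul_le hF_meas.aemeasurable hG_meas.aemeasurable q₁ q₂ q

end Lorentz

section PowerWeight

open Module

variable {E : Type*} [NormedAddCommGroup E] [NormedSpace ℝ E] [FiniteDimensional ℝ E]
  [Nontrivial E] [MeasurableSpace E] [BorelSpace E] (μ : Measure E) [μ.IsAddHaarMeasure]

theorem rearr_norm_rpow_neg_le {δ : ℝ} (hδ : 0 ≤ δ) {t : ℝ} (ht : 0 < t) :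
    rearr μ (fun x => ‖x‖ ^ (-δ)) t ≤
      (μ (Metric.ball 0 1) / ENNReal.ofReal t) ^ (δ / finrank ℝ E) := by
  have hn : (finrank ℝ E : ℝ) ≠ 0 := by exact_mod_cast finrank_pos.ne'
  obtain ⟨V, hV⟩ : ∃ V : ℝ, μ (Metric.ball 0 1) = ENNReal.ofReal V :=
    ⟨_, (ENNReal.ofReal_toReal measure_ball_lt_top.ne).symm⟩
  have hV_pos : 0 < V := ENNReal.ofReal_pos.1 (hV ▸ Metric.measure_ball_pos μ 0 one_pos)
  set R : ℝ := (t / V) ^ (finrank ℝ E : ℝ)⁻¹ with hR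
  have hR_pos : 0 < R := by positivity
  have level_eq : (μ (Metric.ball 0 1) / ENNReal.ofReal t) ^ (δ / finrank ℝ E) =
      ENNReal.ofReal (R ^ (-δ)) := by
    rw [hV, ← ENNReal.ofReal_div_of_pos ht, ENNReal.ofReal_rpow_of_pos (by positivity), hR,
      ← Real.rpow_mul (by positivity), mul_neg, Real.rpow_neg (by positivity),
      ← Real.inv_rpow (by positivity), inv_div, div_eq_inv_mul δ]
  have superlevel_subset :
      {x : E | ENNReal.ofReal (R ^ (-δ)) < ENNReal.ofReal |‖x‖ ^ (-δ)|} ⊆ Metric.ball 0 R := by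
    intro x hx
    rw [mem_ball_zero_iff]
    by_contra! hRx
    refine (ENNReal.ofReal_le_ofReal ?_).not_gt hx
    rw [abs_of_nonneg (by positivity)]
    exact Real.rpow_le_rpow_of_nonpos hR_pos hRx (neg_nonpos.2 hδ)
  rw [level_eq]
  refine rearr_le_of_distribFn_le ((measure_mono superlevel_subset).trans_eq ?_)
  rw [Measure.addHaar_ball_of_pos μ 0 hR_pos, hV, hR, Real.rpow_inv_natCast_pow (by positivity)
    (by exact_mod_cast hn), ← ENNReal.ofReal_mul (by positivity), div_mul_cancel₀ t hV_pos.ne']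

theorem lorentz_norm_rpow_neg_le {δ : ℝ} (hδ : 0 ≤ δ) :
    lorentz μ (finrank ℝ E / ENNReal.ofReal δ) ∞ (fun x => ‖x‖ ^ (-δ)) ≤
      μ (Metric.ball 0 1) ^ (δ / finrank ℝ E) := by
  rw [lorentz, if_pos rfl]
  refine iSup₂_le fun t ht => ?_
  have ht_pos : 0 < t := ht
  rw [ENNReal.toReal_div, ENNReal.toReal_natCast, ENNReal.toReal_ofReal hδ, inv_div]
  calc ENNReal.ofReal t ^ (δ / finrank ℝ E) * rearr μ (fun x => ‖x‖ ^ (-δ)) t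
      ≤ ENNReal.ofReal t ^ (δ / finrank ℝ E) *
          (μ (Metric.ball 0 1) / ENNReal.ofReal t) ^ (δ / finrank ℝ E) := by
        gcongr
        exact rearr_norm_rpow_neg_le μ hδ ht_pos
    _ = μ (Metric.ball 0 1) ^ (δ / finrank ℝ E) := by
        rw [← ENNReal.mul_rpow_of_nonneg _ _ (by positivity),
          ENNReal.mul_div_cancel (by simpa) ENNReal.ofReal_ne_top]

end PowerWeight

section DyadicAverage

/-- The sum `∑ⱼ 2⁻ʲ g(2⁻ʲ t)`: for decreasing `g`, a dyadic substitute for the Hardy average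
`t⁻¹ ∫₀ᵗ g`. -/
noncomputable def dyadicAverage (g : ℝ → ℝ≥0∞) (t : ℝ) : ℝ≥0∞ :=
  ∑' j : ℕ, ENNReal.ofReal (1 / 2) ^ j * g ((1 / 2) ^ j * t)

@[fun_prop]
theorem measurable_dyadicAverage {g : ℝ → ℝ≥0∞} (hg : Measurable g) :
    Measurable (dyadicAverage g) :=
  Measurable.tsum fun _ => by fun_prop

variable {α : Type*} [MeasurableSpace α] {μ : Measure α}

theorem ae_le_add_tsum_indicator_superlevel {f : α → ℝ≥0∞} {l : ℕ → ℝ≥0∞}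
    (hl : Filter.Tendsto (fun j => μ {x | l j < f x}) Filter.atTop (nhds 0)) :
    ∀ᵐ x ∂μ, f x ≤ l 0 + ∑' j, indicator {x | l j < f x} (fun _ => l (j + 1)) x := by
  have iInter_null : μ (⋂ j, {x | l j < f x}) = 0 :=
    le_antisymm (ge_of_tendsto' hl fun j => measure_mono (iInter_subset _ j)) zero_le
  filter_upwards [measure_eq_zero_iff_ae_notMem.1 iInter_null] with x hx
  simp only [mem_iInter, mem_ofPred_eq, not_forall, not_lt] at hx
  classical
  rcases hfirst : Nat.find hx with _ | k
  · exact (hfirst ▸ Nat.find_spec hx : f x ≤ l 0).trans le_self_add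
  · have x_mem : x ∈ {x | l k < f x} := not_le.1 (Nat.find_min hx (by lia))
    calc f x ≤ l (k + 1) := hfirst ▸ Nat.find_spec hx
      _ = indicator {x | l k < f x} (fun _ => l (k + 1)) x := by rw [indicator_of_mem x_mem]
      _ ≤ ∑' j, indicator {x | l j < f x} (fun _ => l (j + 1)) x := ENNReal.le_tsum k
      _ ≤ _ := le_add_self

theorem setLIntegral_le_add_tsum_superlevel {f : α → ℝ≥0∞} (hf : Measurable f) {l : ℕ → ℝ≥0∞}
    (hl : Filter.Tendsto (fun j => μ {x | l j < f x}) Filter.atTop (nhds 0)) (s : Set α) :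
    ∫⁻ x in s, f x ∂μ ≤ l 0 * μ s + ∑' j, l (j + 1) * μ {x | l j < f x} := by
  have superlevel_meas (j : ℕ) : MeasurableSet {x | l j < f x} :=
    measurableSet_lt measurable_const hf
  calc ∫⁻ x in s, f x ∂μ
      ≤ ∫⁻ x in s, (l 0 + ∑' j, indicator {x | l j < f x} (fun _ => l (j + 1)) x) ∂μ :=
        lintegral_mono_ae (ae_restrict_of_ae (ae_le_add_tsum_indicator_superlevel hl))
    _ = l 0 * μ s + ∑' j, l (j + 1) * μ.restrict s {x | l j < f x} := by
        rw [lintegral_add_left measurable_const, lintegral_tsum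
          fun j => (measurable_const.indicator (superlevel_meas j)).aemeasurable]
        simp only [lintegral_const, Measure.restrict_apply_univ,
          lintegral_indicator_const (superlevel_meas _)]
    _ ≤ l 0 * μ s + ∑' j, l (j + 1) * μ {x | l j < f x} := by
        gcongr with j
        exact Measure.restrict_le_self

theorem tendsto_distribFn_rearr {f : α → ℝ} {ι : Type*} {u : ι → ℝ} {L : Filter ι}
    (hu : Filter.Tendsto u L (nhds 0)) :
    Filter.Tendsto (fun i => distribFn μ f (rearr μ f (u i))) L (nhds 0) :=
  tendsto_of_tendsto_of_tendsto_of_le_of_le tendsto_const_nhds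
    (by simpa using ENNReal.tendsto_ofReal hu) (fun _ => zero_le) fun _ => distribFn_rearr_le _

theorem setLIntegral_le_dyadicAverage_rearr {f : α → ℝ} (hf : Measurable f) {s : Set α} {T : ℝ}
    (hs : μ s ≤ ENNReal.ofReal T) :
    ∫⁻ x in s, ENNReal.ofReal |f x| ∂μ ≤
      2 * ENNReal.ofReal T * dyadicAverage (rearr μ f) T := by
  have halving_tendsto : Filter.Tendsto (fun j : ℕ => (1 / 2) ^ j * T) Filter.atTop (nhds 0) := by
    simpa using
      (_root_.tendsto_pow_atTop_nhds_zero_of_lt_one one_half_pos.le one_half_lt_one).mul_const T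
  set l : ℕ → ℝ≥0∞ := fun j => rearr μ f ((1 / 2) ^ j * T) with hl
  have superlevel_le (j : ℕ) :
      μ {x | l j < ENNReal.ofReal |f x|} ≤ ENNReal.ofReal (1 / 2) ^ j * ENNReal.ofReal T := by
    rw [← ENNReal.ofReal_pow (by norm_num), ← ENNReal.ofReal_mul (by positivity)]
    exact distribFn_rearr_le _
  have dyadicAverage_eq : dyadicAverage (rearr μ f) T =
      l 0 + ∑' j, ENNReal.ofReal (1 / 2) ^ (j + 1) * l (j + 1) := by
    rw [dyadicAverage, tsum_eq_zero_add' ENNReal.summable, pow_zero, pow_zero, one_mul, one_mul]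
    simp only [hl, pow_zero, one_mul]
  have term_eq (j : ℕ) : l (j + 1) * (ENNReal.ofReal (1 / 2) ^ j * ENNReal.ofReal T) =
      2 * ENNReal.ofReal T * (ENNReal.ofReal (1 / 2) ^ (j + 1) * l (j + 1)) := by
    have two_mul_half : ENNReal.ofReal (1 / 2) * 2 = 1 := by
      rw [← ENNReal.ofReal_ofNat 2, ← ENNReal.ofReal_mul (by norm_num)]
      norm_num
    rw [← mul_one (l (j + 1) * _), ← two_mul_half]
    ring
  calc ∫⁻ x in s, ENNReal.ofReal |f x| ∂μ
      ≤ l 0 * μ s + ∑' j, l (j + 1) * μ {x | l j < ENNReal.ofReal |f x|} :=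
        setLIntegral_le_add_tsum_superlevel (by fun_prop)
          (tendsto_distribFn_rearr halving_tendsto) s
    _ ≤ 2 * (l 0 * ENNReal.ofReal T) +
          ∑' j, l (j + 1) * (ENNReal.ofReal (1 / 2) ^ j * ENNReal.ofReal T) := by
        gcongr ?_ + ∑' j, _ * ?_ with j
        · exact (mul_le_mul_right hs _).trans (le_mul_of_one_le_left zero_le one_le_two)
        · exact superlevel_le j
    _ = 2 * ENNReal.ofReal T * dyadicAverage (rearr μ f) T := by
        rw [dyadicAverage_eq, mul_add, ← ENNReal.tsum_mul_left]
        simp only [term_eq, mul_comm (l 0), mul_assoc]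

end DyadicAverage

section LevelCutoff

theorem deriv_smoothTransition_of_nonpos {u : ℝ} (hu : u ≤ 0) :
    deriv Real.smoothTransition u = 0 :=
  IsLocalMin.deriv_eq_zero <| .of_forall fun v => by
    simpa only [Real.smoothTransition.zero_of_nonpos hu] using Real.smoothTransition.nonneg v

theorem deriv_smoothTransition_of_one_le {u : ℝ} (hu : 1 ≤ u) :
    deriv Real.smoothTransition u = 0 :=
  IsLocalMax.deriv_eq_zero <| .of_forall fun v => by
    simpa only [Real.smoothTransition.one_of_one_le hu] using Real.smoothTransition.le_one v

theorem exists_abs_deriv_smoothTransition_le :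
    ∃ M : ℝ, ∀ u, |deriv Real.smoothTransition u| ≤ M := by
  refine ((Real.smoothTransition.contDiff (n := 1)).continuous_deriv
    le_rfl).bounded_above_of_compact_support (.intro (isCompact_Icc (a := 0) (b := 1)) ?_)
  intro u hu
  rcases lt_or_ge u 0 with h0 | h0
  · exact deriv_smoothTransition_of_nonpos h0.le
  · exact deriv_smoothTransition_of_one_le (not_le.1 fun h1 => hu ⟨h0, h1⟩).le

/-- A smooth function of `|y|` rising from `0` at `|y| = l₁` to `1` at `|y| = l₂`. Composing `f`
with it isolates the part of `f` between two levels. It is written in terms of `y ^ 2` to be smooth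
at the origin. -/
noncomputable def levelCutoff (l₁ l₂ y : ℝ) : ℝ :=
  Real.smoothTransition ((y ^ 2 - l₁ ^ 2) / (l₂ ^ 2 - l₁ ^ 2))

variable {l₁ l₂ y : ℝ}

theorem contDiff_levelCutoff : ContDiff ℝ 1 (levelCutoff l₁ l₂) :=
  Real.smoothTransition.contDiff.comp (((contDiff_id.pow 2).sub contDiff_const).div_const _)

theorem sq_sub_sq_pos_of_lt (hl₁ : 0 ≤ l₁) (hl : l₁ < l₂) : 0 < l₂ ^ 2 - l₁ ^ 2 :=
  sub_pos.2 (pow_lt_pow_left₀ hl hl₁ two_ne_zero)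

theorem levelCutoff_arg_nonpos (hl₁ : 0 ≤ l₁) (hl : l₁ < l₂) (hy : |y| ≤ l₁) :
    (y ^ 2 - l₁ ^ 2) / (l₂ ^ 2 - l₁ ^ 2) ≤ 0 :=
  div_nonpos_of_nonpos_of_nonneg (sub_nonpos.2 (sq_le_sq.2 (by rwa [abs_of_nonneg hl₁])))
    (sq_sub_sq_pos_of_lt hl₁ hl).le

theorem one_le_levelCutoff_arg (hl₁ : 0 ≤ l₁) (hl : l₁ < l₂) (hy : l₂ ≤ |y|) :
    1 ≤ (y ^ 2 - l₁ ^ 2) / (l₂ ^ 2 - l₁ ^ 2) := by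
  rw [one_le_div (sq_sub_sq_pos_of_lt hl₁ hl)]
  gcongr ?_ - _
  exact sq_le_sq.2 (by rwa [abs_of_pos (hl₁.trans_lt hl)])

theorem levelCutoff_of_abs_le (hl₁ : 0 ≤ l₁) (hl : l₁ < l₂) (hy : |y| ≤ l₁) :
    levelCutoff l₁ l₂ y = 0 :=
  Real.smoothTransition.zero_of_nonpos (levelCutoff_arg_nonpos hl₁ hl hy)

theorem levelCutoff_of_le_abs (hl₁ : 0 ≤ l₁) (hl : l₁ < l₂) (hy : l₂ ≤ |y|) :
    levelCutoff l₁ l₂ y = 1 :=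
  Real.smoothTransition.one_of_one_le (one_le_levelCutoff_arg hl₁ hl hy)

theorem deriv_levelCutoff (l₁ l₂ y : ℝ) :
    deriv (levelCutoff l₁ l₂) y =
      deriv Real.smoothTransition ((y ^ 2 - l₁ ^ 2) / (l₂ ^ 2 - l₁ ^ 2)) *
        (2 * y / (l₂ ^ 2 - l₁ ^ 2)) := by
  have arg_hasDerivAt : HasDerivAt (fun z : ℝ => (z ^ 2 - l₁ ^ 2) / (l₂ ^ 2 - l₁ ^ 2))
      (2 * y / (l₂ ^ 2 - l₁ ^ 2)) y := by
    simpa using (((hasDerivAt_id y).pow 2).sub_const (l₁ ^ 2)).div_const (l₂ ^ 2 - l₁ ^ 2)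
  have transition_hasDerivAt :=
    ((Real.smoothTransition.contDiff (n := 1)).differentiable one_ne_zero
      ((y ^ 2 - l₁ ^ 2) / (l₂ ^ 2 - l₁ ^ 2))).hasDerivAt
  exact (transition_hasDerivAt.comp y arg_hasDerivAt).deriv

theorem deriv_levelCutoff_of_abs_le (hl₁ : 0 ≤ l₁) (hl : l₁ < l₂) (hy : |y| ≤ l₁) :
    deriv (levelCutoff l₁ l₂) y = 0 := by
  rw [deriv_levelCutoff,
    deriv_smoothTransition_of_nonpos (levelCutoff_arg_nonpos hl₁ hl hy), zero_mul]

theorem abs_deriv_levelCutoff_le {M : ℝ} (hM : ∀ u, |deriv Real.smoothTransition u| ≤ M)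
    (hl₁ : 0 ≤ l₁) (hl : l₁ < l₂) (y : ℝ) :
    |deriv (levelCutoff l₁ l₂) y| ≤ 2 * M / (l₂ - l₁) := by
  have hM_nonneg : 0 ≤ M := (abs_nonneg _).trans (hM 0)
  have hl_sub_pos : 0 < l₂ - l₁ := sub_pos.2 hl
  have hl_add_pos : 0 < l₂ + l₁ := by linarith
  have sq_sub_pos := sq_sub_sq_pos_of_lt hl₁ hl
  rw [deriv_levelCutoff, abs_mul]
  rcases le_or_gt l₂ |y| with hy | hy
  · rw [deriv_smoothTransition_of_one_le (one_le_levelCutoff_arg hl₁ hl hy), abs_zero, zero_mul]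
    positivity
  · calc _ ≤ M * |2 * y / (l₂ ^ 2 - l₁ ^ 2)| := by gcongr; exact hM _
      _ = M * (2 * |y| / ((l₂ + l₁) * (l₂ - l₁))) := by
          rw [abs_div, abs_mul, abs_two, abs_of_pos sq_sub_pos, sq_sub_sq]
      _ ≤ M * (2 * (l₂ + l₁) / ((l₂ + l₁) * (l₂ - l₁))) := by
          gcongr
          linarith
      _ = 2 * M / (l₂ - l₁) := by field

end LevelCutoff

section LevelSobolev

open Module
open scoped NNReal

theorem distribFn_rpow_le_eLpNorm_levelCutoff_comp {α : Type*} [MeasurableSpace α]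
    (μ : Measure α) {p : ℝ≥0} (hp : p ≠ 0) {f : α → ℝ} (hf : Measurable f) {l₁ l₂ : ℝ≥0}
    (hl : l₁ < l₂) :
    distribFn μ f l₂ ^ (p : ℝ)⁻¹ ≤ eLpNorm (levelCutoff l₁ l₂ ∘ f) p μ := by
  have one_le_enorm_rpow : {x | (l₂ : ℝ≥0∞) < ENNReal.ofReal |f x|} ⊆
      {x | 1 ≤ ‖(levelCutoff l₁ l₂ ∘ f) x‖ₑ ^ (p : ℝ)} := by
    intro x hx
    have hx_le : (l₂ : ℝ) ≤ |f x| := by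
      rw [mem_ofPred_eq, lt_ofReal_iff_toReal_lt coe_ne_top, coe_toReal] at hx
      exact hx.le
    rw [mem_ofPred_eq, Function.comp_apply,
      levelCutoff_of_le_abs l₁.coe_nonneg (NNReal.coe_lt_coe.2 hl) hx_le, enorm_one,
      ENNReal.one_rpow]
  calc distribFn μ f l₂ ^ (p : ℝ)⁻¹
      ≤ (1 * μ {x | 1 ≤ ‖(levelCutoff l₁ l₂ ∘ f) x‖ₑ ^ (p : ℝ)}) ^ (1 / (p : ℝ)) := by
        rw [one_mul, one_div]
        gcongr
        exact measure_mono one_le_enorm_rpow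
    _ ≤ eLpNorm (levelCutoff l₁ l₂ ∘ f) p μ := pow_mul_meas_ge_le_eLpNorm μ
        (by simpa using hp) coe_ne_top
        (contDiff_levelCutoff.continuous.measurable.comp hf).aestronglyMeasurable 1

variable {E : Type*} [NormedAddCommGroup E] [NormedSpace ℝ E]

theorem enorm_fderiv_levelCutoff_comp_le {M : ℝ} (hM : ∀ u, |deriv Real.smoothTransition u| ≤ M)
    {f : E → ℝ} (hf : Differentiable ℝ f) {l₁ l₂ : ℝ≥0} (hl : l₁ < l₂) (x : E) :
    ‖fderiv ℝ (levelCutoff l₁ l₂ ∘ f) x‖ₑ ≤ ENNReal.ofReal (2 * M / (l₂ - l₁)) *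
      indicator {x | l₁ < ENNReal.ofReal |f x|} (fun x => ‖fderiv ℝ f x‖ₑ) x := by
  have cutoff_hasDerivAt :=
    ((contDiff_levelCutoff (l₁ := l₁) (l₂ := l₂)).differentiable one_ne_zero (f x)).hasDerivAt
  rw [(cutoff_hasDerivAt.comp_hasFDerivAt x (hf x).hasFDerivAt).fderiv, enorm_smul,
    Real.enorm_eq_ofReal_abs]
  by_cases hx : l₁ < ENNReal.ofReal |f x|
  · rw [indicator_of_mem (by exact hx)]
    gcongr
    exact abs_deriv_levelCutoff_le hM l₁.coe_nonneg (NNReal.coe_lt_coe.2 hl) (f x)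
  · have hx_le : |f x| ≤ l₁ := by
      rwa [not_lt, ENNReal.ofReal_le_coe] at hx
    rw [deriv_levelCutoff_of_abs_le l₁.coe_nonneg (NNReal.coe_lt_coe.2 hl) hx_le, abs_zero,
      ENNReal.ofReal_zero, zero_mul]
    exact zero_le

variable [MeasurableSpace E] [BorelSpace E]

theorem sub_mul_lintegral_enorm_fderiv_levelCutoff_comp_le (μ : Measure E) {M : ℝ}
    (hM : ∀ u, |deriv Real.smoothTransition u| ≤ M) {f : E → ℝ} (hf : ContDiff ℝ 1 f)
    {l₁ l₂ : ℝ≥0} (hl : l₁ < l₂) :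
    ((l₂ : ℝ≥0∞) - l₁) * ∫⁻ x, ‖fderiv ℝ (levelCutoff l₁ l₂ ∘ f) x‖ₑ ∂μ ≤
      ENNReal.ofReal (2 * M) * ∫⁻ x in {x | l₁ < ENNReal.ofReal |f x|}, ‖fderiv ℝ f x‖ₑ ∂μ := by
  have hl_sub_pos : (0 : ℝ) < l₂ - l₁ := sub_pos.2 hl
  have superlevel_measurableSet : MeasurableSet {x | l₁ < ENNReal.ofReal |f x|} :=
    measurableSet_lt measurable_const hf.continuous.abs.measurable.ennreal_ofReal
  calc ((l₂ : ℝ≥0∞) - l₁) * ∫⁻ x, ‖fderiv ℝ (levelCutoff l₁ l₂ ∘ f) x‖ₑ ∂μ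
      ≤ ENNReal.ofReal (l₂ - l₁) * ∫⁻ x, ENNReal.ofReal (2 * M / (l₂ - l₁)) *
          indicator {x | l₁ < ENNReal.ofReal |f x|} (fun x => ‖fderiv ℝ f x‖ₑ) x ∂μ := by
        rw [ENNReal.ofReal_sub _ l₁.coe_nonneg, ofReal_coe_nnreal, ofReal_coe_nnreal]
        gcongr with x
        exact enorm_fderiv_levelCutoff_comp_le hM (hf.differentiable one_ne_zero) hl x
    _ = ENNReal.ofReal (2 * M) * ∫⁻ x in {x | l₁ < ENNReal.ofReal |f x|}, ‖fderiv ℝ f x‖ₑ ∂μ := by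
        rw [lintegral_const_mul' _ _ ofReal_ne_top, lintegral_indicator superlevel_measurableSet,
          ← mul_assoc, ← ENNReal.ofReal_mul hl_sub_pos.le, mul_div_cancel₀ _ hl_sub_pos.ne']

variable [FiniteDimensional ℝ E] (μ : Measure E) [μ.IsAddHaarMeasure]

theorem exists_sub_mul_distribFn_rpow_le (hn : 1 < finrank ℝ E) :
    ∃ C : ℝ≥0, ∀ f : E → ℝ, ContDiff ℝ 1 f → HasCompactSupport f → ∀ l₁ l₂ : ℝ≥0, l₁ < l₂ →
      ((l₂ : ℝ≥0∞) - l₁) * distribFn μ f l₂ ^ (1 - (finrank ℝ E : ℝ)⁻¹) ≤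
        C * ∫⁻ x in {x | l₁ < ENNReal.ofReal |f x|}, ‖fderiv ℝ f x‖ₑ ∂μ := by
  obtain ⟨M, hM⟩ := exists_abs_deriv_smoothTransition_le
  obtain ⟨p, hp⟩ : ∃ p : ℝ≥0, NNReal.HolderConjugate (finrank ℝ E) p :=
    ⟨_, .conjExponent (by exact_mod_cast hn)⟩
  refine ⟨eLpNormLESNormFDerivOneConst μ p * (2 * M).toNNReal, fun f hf hf_supp l₁ l₂ hl => ?_⟩
  have cutoff_comp_supp : HasCompactSupport (levelCutoff l₁ l₂ ∘ f) :=
    hf_supp.comp_left (levelCutoff_of_abs_le l₁.coe_nonneg (NNReal.coe_lt_coe.2 hl) (by simp))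
  calc ((l₂ : ℝ≥0∞) - l₁) * distribFn μ f l₂ ^ (1 - (finrank ℝ E : ℝ)⁻¹)
      ≤ ((l₂ : ℝ≥0∞) - l₁) * eLpNorm (levelCutoff l₁ l₂ ∘ f) p μ := by
        rw [show 1 - (finrank ℝ E : ℝ)⁻¹ = (p : ℝ)⁻¹ from hp.coe.one_sub_inv]
        gcongr
        exact distribFn_rpow_le_eLpNorm_levelCutoff_comp μ hp.symm.ne_zero
          hf.continuous.measurable hl
    _ ≤ ((l₂ : ℝ≥0∞) - l₁) * (eLpNormLESNormFDerivOneConst μ p *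
          ∫⁻ x, ‖fderiv ℝ (levelCutoff l₁ l₂ ∘ f) x‖ₑ ∂μ) := by
        rw [← eLpNorm_one_eq_lintegral_enorm]
        gcongr
        exact eLpNorm_le_eLpNorm_fderiv_one μ (contDiff_levelCutoff.comp hf) cutoff_comp_supp hp
    _ ≤ eLpNormLESNormFDerivOneConst μ p * (ENNReal.ofReal (2 * M) *
          ∫⁻ x in {x | l₁ < ENNReal.ofReal |f x|}, ‖fderiv ℝ f x‖ₑ ∂μ) := by
        rw [mul_left_comm]
        gcongr _ * ?_
        exact sub_mul_lintegral_enorm_fderiv_levelCutoff_comp_le μ hM hf hl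
    _ = (eLpNormLESNormFDerivOneConst μ p * (2 * M).toNNReal : ℝ≥0) *
          ∫⁻ x in {x | l₁ < ENNReal.ofReal |f x|}, ‖fderiv ℝ f x‖ₑ ∂μ := by
        rw [coe_mul, mul_assoc, ENNReal.ofReal]

end LevelSobolev

section LorentzSobolev

open Filter Module Topology
open scoped NNReal

theorem tendsto_rearr_atTop {α : Type*} [MeasurableSpace α] {μ : Measure α} {f : α → ℝ}
    (hf : μ (Function.support f) ≠ ∞) : Tendsto (rearr μ f) atTop (𝓝 0) := by
  refine tendsto_const_nhds.congr' ?_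
  filter_upwards [eventually_ge_atTop (μ (Function.support f)).toReal] with t ht
  refine (nonpos_iff_eq_zero.1 (rearr_le_of_distribFn_le ?_)).symm
  rw [distribFn]
  simpa [Function.support] using (ENNReal.le_ofReal_iff_toReal_le hf (toReal_nonneg.trans ht)).2 ht

theorem le_tsum_two_pow_of_le_add {F H : ℝ → ℝ≥0∞}
    (hF : ∀ t, 0 < t → F t ≤ F (2 * t) + H (2 * t)) (hF_tendsto : Tendsto F atTop (𝓝 0)) {t : ℝ}
    (ht : 0 < t) : F t ≤ ∑' k : ℕ, H (2 ^ k * (2 * t)) := by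
  have le_add_sum (m : ℕ) : F t ≤ F (2 ^ m * t) + ∑ k ∈ Finset.range m, H (2 ^ k * (2 * t)) := by
    induction m with
    | zero => simp
    | succ m ih =>
      calc F t ≤ F (2 ^ m * t) + ∑ k ∈ Finset.range m, H (2 ^ k * (2 * t)) := ih
        _ ≤ F (2 * (2 ^ m * t)) + H (2 * (2 ^ m * t)) +
              ∑ k ∈ Finset.range m, H (2 ^ k * (2 * t)) := by
            gcongr
            exact hF _ (by positivity)
        _ = F (2 ^ (m + 1) * t) + ∑ k ∈ Finset.range (m + 1), H (2 ^ k * (2 * t)) := by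
            rw [Finset.sum_range_succ, mul_left_comm 2, pow_succ, mul_assoc _ 2 t]
            ring
  have pow_mul_tendsto : Tendsto (fun m : ℕ => (2 : ℝ) ^ m * t) atTop atTop :=
    (tendsto_pow_atTop_atTop_of_one_lt (one_lt_two (α := ℝ))).atTop_mul_const ht
  have bound_tendsto : Tendsto (fun m : ℕ => F (2 ^ m * t) + ∑' k : ℕ, H (2 ^ k * (2 * t))) atTop
      (𝓝 (∑' k : ℕ, H (2 ^ k * (2 * t)))) := by
    simpa using (hF_tendsto.comp pow_mul_tendsto).add tendsto_const_nhds
  refine ge_of_tendsto' bound_tendsto fun m => (le_add_sum m).trans ?_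
  gcongr
  exact ENNReal.sum_le_tsum _

theorem rearr_le_rearr_two_mul_add {α : Type*} [MeasurableSpace α] {μ : Measure α} {f g : α → ℝ}
    (hg : Measurable g) {s : ℝ} (hs₀ : 0 ≤ s) (hs₁ : s ≤ 1) {C : ℝ≥0∞}
    (h : ∀ l₁ l₂ : ℝ≥0, l₁ < l₂ → ((l₂ : ℝ≥0∞) - l₁) * distribFn μ f l₂ ^ (1 - s) ≤
      C * ∫⁻ x in {x | l₁ < ENNReal.ofReal |f x|}, ENNReal.ofReal |g x| ∂μ) {t : ℝ} (ht : 0 < t) :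
    rearr μ f t ≤ rearr μ f (2 * t) +
      4 * C * (ENNReal.ofReal (2 * t) ^ s * dyadicAverage (rearr μ g) (2 * t)) := by
  set A := dyadicAverage (rearr μ g) (2 * t)
  refine le_of_forall_lt_imp_le_of_dense fun l₂ hl₂ => ?_
  rcases le_or_gt l₂ (rearr μ f (2 * t)) with hl | hl
  · exact hl.trans le_self_add
  lift l₂ to ℝ≥0 using hl₂.ne_top
  obtain ⟨l₁, hl₁⟩ : ∃ l₁ : ℝ≥0, l₁ = rearr μ f (2 * t) := ⟨_, coe_toNNReal hl.ne_top⟩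
  rw [← hl₁, ENNReal.coe_lt_coe] at hl
  have lintegral_le : ∫⁻ x in {x | l₁ < ENNReal.ofReal |f x|}, ENNReal.ofReal |g x| ∂μ ≤
      2 * ENNReal.ofReal (2 * t) * A :=
    setLIntegral_le_dyadicAverage_rearr hg (hl₁ ▸ distribFn_rearr_le (2 * t))
  have ofReal_ne_zero : ENNReal.ofReal t ≠ 0 := by simpa using ht
  have rpow_mul_rpow :
      ENNReal.ofReal t ^ (1 - s) * ENNReal.ofReal t ^ s = ENNReal.ofReal t := by
    rw [← ENNReal.rpow_add _ _ ofReal_ne_zero ofReal_ne_top, sub_add_cancel, ENNReal.rpow_one]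
  have rpow_mul_sub_le : ENNReal.ofReal t ^ (1 - s) * (l₂ - l₁) ≤
      ENNReal.ofReal t ^ (1 - s) * (4 * C * (ENNReal.ofReal (2 * t) ^ s * A)) := by
    calc ENNReal.ofReal t ^ (1 - s) * (l₂ - l₁)
        ≤ (l₂ - l₁) * distribFn μ f l₂ ^ (1 - s) := by
          rw [mul_comm]
          gcongr
          exact (lt_distribFn_of_lt_rearr hl₂).le
      _ ≤ C * (2 * (2 * ENNReal.ofReal t) * A) := by
          rw [← ENNReal.ofReal_ofNat 2, ← ENNReal.ofReal_mul zero_le_two, ENNReal.ofReal_ofNat]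
          exact (h l₁ l₂ hl).trans (by gcongr)
      _ = ENNReal.ofReal t ^ (1 - s) * (4 * C * (ENNReal.ofReal t ^ s * A)) := by
          nth_rw 1 [← rpow_mul_rpow]
          ring
      _ ≤ _ := by
          gcongr
          linarith
  rw [← tsub_le_iff_left, ← hl₁]
  exact (ENNReal.mul_le_mul_iff_right (by simp [ht]) (by finiteness)).1 rpow_mul_sub_le

theorem eLpNorm_rpow_mul_le_of_le_add {q : ℝ≥0∞} (hq : 1 ≤ q) {s : ℝ} (hs : 0 ≤ s)
    {F H : ℝ → ℝ≥0∞} (hH : Measurable H) (hF : ∀ t, 0 < t → F t ≤ F (2 * t) + H (2 * t))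
    (hF_tendsto : Tendsto F atTop (𝓝 0)) :
    eLpNorm (fun t => ENNReal.ofReal t ^ s * F t) q dilationMeasure ≤
      (1 - ENNReal.ofReal (2 ^ (-s)))⁻¹ *
        eLpNorm (fun t => ENNReal.ofReal t ^ s * H t) q dilationMeasure := by
  set W : ℝ → ℝ≥0∞ := fun t => ENNReal.ofReal t ^ s * ∑' k : ℕ, H (2 ^ k * t) with hW
  have hW_meas : Measurable W :=
    (ENNReal.measurable_ofReal.pow_const s).mul (.tsum fun k => by fun_prop)
  calc eLpNorm (fun t => ENNReal.ofReal t ^ s * F t) q dilationMeasure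
      ≤ eLpNorm (fun t => W (2 * t)) q dilationMeasure := by
        refine eLpNorm_mono_enorm_ae (ae_dilationMeasure_iff.2 (.of_forall fun t ht => ?_))
        simp only [enorm_eq_self, hW]
        gcongr
        · linarith
        · exact le_tsum_two_pow_of_le_add hF hF_tendsto ht
    _ = eLpNorm W q dilationMeasure := eLpNorm_comp_const_mul two_pos hW_meas q
    _ ≤ (1 - ENNReal.ofReal (2 ^ (-s)))⁻¹ *
          eLpNorm (fun t => ENNReal.ofReal t ^ s * H t) q dilationMeasure := by
        simpa using eLpNorm_rpow_mul_tsum_dilation_le hq two_pos 1 s hH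

theorem eLpNorm_rpow_mul_dyadicAverage_le {q : ℝ≥0∞} (hq : 1 ≤ q) (s : ℝ) {g : ℝ → ℝ≥0∞}
    (hg : Measurable g) :
    eLpNorm (fun t => ENNReal.ofReal t ^ s * dyadicAverage g t) q dilationMeasure ≤
      (1 - ENNReal.ofReal (1 / 2 * (1 / 2) ^ (-s)))⁻¹ *
        eLpNorm (fun t => ENNReal.ofReal t ^ s * g t) q dilationMeasure :=
  eLpNorm_rpow_mul_tsum_dilation_le hq one_half_pos (1 / 2) s hg

theorem eLpNorm_rpow_mul_le_of_le_add_dyadicAverage {q : ℝ≥0∞} (hq : 1 ≤ q) {s : ℝ} (hs : 0 ≤ s)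
    (θ : ℝ) {K : ℝ≥0∞} {F g : ℝ → ℝ≥0∞} (hg : Measurable g)
    (hF : ∀ t, 0 < t →
      F t ≤ F (2 * t) + K * (ENNReal.ofReal (2 * t) ^ θ * dyadicAverage g (2 * t)))
    (hF_tendsto : Tendsto F atTop (𝓝 0)) :
    eLpNorm (fun t => ENNReal.ofReal t ^ s * F t) q dilationMeasure ≤
      (1 - ENNReal.ofReal (2 ^ (-s)))⁻¹ * K *
        (1 - ENNReal.ofReal (1 / 2 * (1 / 2) ^ (-(s + θ))))⁻¹ *
        eLpNorm (fun t => ENNReal.ofReal t ^ (s + θ) * g t) q dilationMeasure := by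
  have combine_rpow : (fun t => ENNReal.ofReal t ^ s *
      (K * (ENNReal.ofReal t ^ θ * dyadicAverage g t))) =ᵐ[dilationMeasure]
      fun t => ENNReal.ofReal t ^ (s + θ) * dyadicAverage g t * K := by
    refine ae_dilationMeasure_iff.2 (.of_forall fun t ht => ?_)
    simp only [ENNReal.rpow_add s θ (ofReal_pos.2 ht).ne' ofReal_ne_top]
    ring
  calc eLpNorm (fun t => ENNReal.ofReal t ^ s * F t) q dilationMeasure
      ≤ (1 - ENNReal.ofReal (2 ^ (-s)))⁻¹ *
          eLpNorm (fun t => ENNReal.ofReal t ^ (s + θ) * dyadicAverage g t * K) q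
            dilationMeasure := by
        rw [← eLpNorm_congr_ae combine_rpow]
        exact eLpNorm_rpow_mul_le_of_le_add hq hs (by fun_prop) hF hF_tendsto
    _ ≤ (1 - ENNReal.ofReal (2 ^ (-s)))⁻¹ *
          (eLpNorm (fun t => ENNReal.ofReal t ^ (s + θ) * dyadicAverage g t) q
            dilationMeasure * K) := by
        gcongr
        exact eLpNorm_mul_const_le (by fun_prop) q K
    _ ≤ _ := by
        rw [mul_comm _ K, ← mul_assoc, mul_assoc (_ * K)]
        gcongr
        exact eLpNorm_rpow_mul_dyadicAverage_le hq (s + θ) hg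

variable {E : Type*} [NormedAddCommGroup E] [NormedSpace ℝ E] [FiniteDimensional ℝ E]
  [MeasurableSpace E] [BorelSpace E] (μ : Measure E) [μ.IsAddHaarMeasure]

theorem exists_lorentz_le_lorentz_fderiv {p : ℝ} (hp : 1 < p) (hpn : p < finrank ℝ E) :
    ∃ C : ℝ≥0∞, C ≠ ∞ ∧ ∀ q : ℝ≥0∞, 1 ≤ q → ∀ f : E → ℝ, ContDiff ℝ 1 f → HasCompactSupport f →
      lorentz μ (ENNReal.ofReal (p⁻¹ - (finrank ℝ E : ℝ)⁻¹)⁻¹) q f ≤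
        C * lorentz μ (ENNReal.ofReal p) q fun x => ‖fderiv ℝ f x‖ := by
  set d : ℝ := (finrank ℝ E : ℝ)
  have hp_pos : 0 < p := one_pos.trans hp
  have hs : 0 < p⁻¹ - d⁻¹ := sub_pos.2 (inv_strictAnti₀ hp_pos hpn)
  have two_rpow_lt_one : (2 : ℝ) ^ (-(p⁻¹ - d⁻¹)) < 1 :=
    Real.rpow_lt_one_of_one_lt_of_neg one_lt_two (neg_neg_of_pos hs)
  have half_mul_rpow_lt_one : 1 / 2 * (1 / 2 : ℝ) ^ (-p⁻¹) < 1 := by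
    rw [← Real.rpow_one_add' one_half_pos.le (by linarith [inv_lt_one_of_one_lt₀ hp])]
    exact Real.rpow_lt_one one_half_pos.le one_half_lt_one (by linarith [inv_lt_one_of_one_lt₀ hp])
  obtain ⟨C, hC⟩ := exists_sub_mul_distribFn_rpow_le μ (Nat.one_lt_cast.1 (hp.trans hpn))
  refine ⟨(1 - ENNReal.ofReal (2 ^ (-(p⁻¹ - d⁻¹))))⁻¹ * (4 * C) *
    (1 - ENNReal.ofReal (1 / 2 * (1 / 2) ^ (-p⁻¹)))⁻¹, ?_, fun q hq f hf hf_supp => ?_⟩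
  · have := (tsub_pos_of_lt (ofReal_lt_one.2 two_rpow_lt_one)).ne'
    have := (tsub_pos_of_lt (ofReal_lt_one.2 half_mul_rpow_lt_one)).ne'
    finiteness
  have rearr_le (t : ℝ) (ht : 0 < t) : rearr μ f t ≤ rearr μ f (2 * t) +
      4 * C * (ENNReal.ofReal (2 * t) ^ d⁻¹ *
        dyadicAverage (rearr μ fun x => ‖fderiv ℝ f x‖) (2 * t)) :=
    rearr_le_rearr_two_mul_add (hf.continuous_fderiv one_ne_zero).norm.measurable (by positivity)
      (inv_le_one_of_one_le₀ (hp.trans hpn).le)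
      (by simpa only [abs_norm, ofReal_norm] using hC f hf hf_supp) ht
  have rearr_tendsto : Tendsto (rearr μ f) atTop (𝓝 0) :=
    tendsto_rearr_atTop ((measure_mono (subset_tsupport f)).trans_lt hf_supp.measure_lt_top).ne
  have hq_ne_zero : q ≠ 0 := (one_pos.trans_le hq).ne'
  rw [lorentz_eq_eLpNorm hq_ne_zero, lorentz_eq_eLpNorm hq_ne_zero,
    toReal_ofReal (inv_pos.2 hs).le, inv_inv, toReal_ofReal hp_pos.le]
  simpa only [sub_add_cancel] using eLpNorm_rpow_mul_le_of_le_add_dyadicAverage hq hs.le d⁻¹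
    measurable_rearr rearr_le rearr_tendsto

end LorentzSobolev

section CaffarelliKohnNirenberg

open Module

theorem inv_div_ofReal {p : ℝ≥0∞} (hp : p ≠ 0) (a : ℝ) :
    (p / ENNReal.ofReal a)⁻¹ = ENNReal.ofReal a / p :=
  ENNReal.inv_div (.inl ofReal_ne_top) (.inr hp)

theorem ne_zero_of_inv_eq_div_add_div {p p₁ p₂ : ℝ≥0∞} (hp₁ : p₁ ≠ 0) (hp₂ : p₂ ≠ 0) {a b : ℝ}
    (hp : p⁻¹ = ENNReal.ofReal a / p₁ + ENNReal.ofReal b / p₂) : p ≠ 0 := by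
  rw [← ENNReal.inv_ne_top, hp]
  finiteness

theorem lorentz_rpow_mul_rpow_le {α : Type*} [MeasurableSpace α] {μ : Measure α} {f g : α → ℝ}
    {p p₁ p₂ q q₁ q₂ : ℝ≥0∞} {a b : ℝ} (ha : 0 ≤ a) (hb : 0 ≤ b)
    (hp₁ : p₁ ≠ 0) (hp₂ : p₂ ≠ 0) (hq₁ : q₁ ≠ 0) (hq₂ : q₂ ≠ 0)
    (hp : p⁻¹ = ENNReal.ofReal a / p₁ + ENNReal.ofReal b / p₂)
    (hq : q⁻¹ = ENNReal.ofReal a / q₁ + ENNReal.ofReal b / q₂) :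
    lorentz μ p q ((fun x => |f x| ^ a) * fun x => |g x| ^ b) ≤
      2 ^ p.toReal⁻¹ * (lorentz μ p₁ q₁ f ^ a * lorentz μ p₂ q₂ g ^ b) := by
  have : HolderTriple (p₁ / ENNReal.ofReal a) (p₂ / ENNReal.ofReal b) p :=
    ⟨by rw [inv_div_ofReal hp₁, inv_div_ofReal hp₂, hp]⟩
  have : HolderTriple (q₁ / ENNReal.ofReal a) (q₂ / ENNReal.ofReal b) q :=
    ⟨by rw [inv_div_ofReal hq₁, inv_div_ofReal hq₂, hq]⟩
  refine (lorentz_mul_le (p₁ / ENNReal.ofReal a) (p₂ / ENNReal.ofReal b) (q₁ / ENNReal.ofReal a)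
    (q₂ / ENNReal.ofReal b) (ne_zero_of_inv_eq_div_add_div hp₁ hp₂ hp)
    (ne_zero_of_inv_eq_div_add_div hq₁ hq₂ hq)).trans ?_
  gcongr
  · exact lorentz_rpow_le ha hq₁
  · exact lorentz_rpow_le hb hq₂

theorem abs_rpow_mul_eq_abs_rpow_neg_mul {ρ : ℝ} (hρ : 0 < ρ) {a b : ℝ} (ha : 0 ≤ a) (hb : 0 ≤ b)
    (hab : a + b = 1) (β δ y : ℝ) :
    |ρ ^ (b * β - δ) * y| = |ρ ^ (-δ) * (|y| ^ a * |ρ ^ β * y| ^ b)| := by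
  rw [abs_mul, abs_of_nonneg (by positivity : 0 ≤ ρ ^ (b * β - δ)),
    abs_of_nonneg (by positivity : 0 ≤ ρ ^ (-δ) * (|y| ^ a * |ρ ^ β * y| ^ b)), abs_mul (ρ ^ β),
    abs_of_nonneg (by positivity : 0 ≤ ρ ^ β)]
  rw [Real.mul_rpow (by positivity) (abs_nonneg y), ← Real.rpow_mul hρ.le,
    mul_left_comm (|y| ^ a), ← Real.rpow_add_of_nonneg (abs_nonneg y) ha hb, hab, Real.rpow_one,
    ← mul_assoc, ← Real.rpow_add hρ]
  ring_nf

theorem ofReal_inv_eq_of_inv_eq_add {r δ d a b p q : ℝ} (hδ : 0 ≤ δ) (hd : 0 < d) (ha : 0 ≤ a)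
    (hb : 0 ≤ b) (hab : a + b = 1) (hp : 0 < p) (hq : 0 < q)
    (h : r⁻¹ = δ / d + (a / p + b / q)) :
    (ENNReal.ofReal r)⁻¹ = ENNReal.ofReal δ / ENNReal.ofReal d +
      (ENNReal.ofReal a / ENNReal.ofReal p + ENNReal.ofReal b / ENNReal.ofReal q) := by
  have hr : 0 < r := by
    rw [← inv_pos, h]
    rcases ha.eq_or_lt with rfl | ha_pos
    · obtain rfl : b = 1 := by simpa using hab
      positivity
    · positivity
  rw [← ofReal_div_of_pos hd, ← ofReal_div_of_pos hp, ← ofReal_div_of_pos hq,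
    ← ofReal_add (by positivity) (by positivity), ← ofReal_add (by positivity) (by positivity),
    ← ofReal_inv_of_pos hr, h]

variable {E : Type*} [NormedAddCommGroup E] [NormedSpace ℝ E] [FiniteDimensional ℝ E]
  [MeasurableSpace E] [BorelSpace E] (μ : Measure E) [μ.IsAddHaarMeasure]

theorem exists_lorentz_norm_rpow_mul_le [Nontrivial E] {r p q q₁ q₂ q₃ : ℝ≥0∞} (hp : p ≠ 0)
    (hq : q ≠ 0) (hq₂ : q₂ ≠ 0) (hq₃ : q₃ ≠ 0) {a b δ : ℝ} (ha : 0 ≤ a) (hb : 0 ≤ b)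
    (hab : a + b = 1) (hδ : 0 ≤ δ) (β : ℝ)
    (hr : r⁻¹ = ENNReal.ofReal δ / finrank ℝ E + (ENNReal.ofReal a / p + ENNReal.ofReal b / q))
    (hq₁ : q₁⁻¹ = ENNReal.ofReal a / q₂ + ENNReal.ofReal b / q₃) :
    ∃ C : ℝ≥0∞, C ≠ ∞ ∧ ∀ f : E → ℝ,
      lorentz μ r q₁ (fun x => ‖x‖ ^ (b * β - δ) * f x) ≤
        C * (lorentz μ p q₂ f ^ a * lorentz μ q q₃ (fun x => ‖x‖ ^ β * f x) ^ b) := by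
  set P : ℝ≥0∞ := (ENNReal.ofReal a / p + ENNReal.ofReal b / q)⁻¹ with hP
  have finrank_ne_zero : (finrank ℝ E : ℝ≥0∞) ≠ 0 := by exact_mod_cast finrank_pos.ne'
  have : HolderTriple (finrank ℝ E / ENNReal.ofReal δ) P r :=
    ⟨by rw [inv_div_ofReal finrank_ne_zero, hP, inv_inv, hr]⟩
  have hr_ne_zero : r ≠ 0 := by
    rw [← ENNReal.inv_ne_top, hr]
    finiteness
  refine ⟨2 ^ r.toReal⁻¹ * μ (Metric.ball 0 1) ^ (δ / finrank ℝ E) * 2 ^ P.toReal⁻¹,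
    by finiteness [(measure_ball_lt_top (μ := μ) (x := 0) (r := 1)).ne], fun f => ?_⟩
  set F : E → ℝ := (fun x => |f x| ^ a) * fun x => |‖x‖ ^ β * f x| ^ b
  calc lorentz μ r q₁ (fun x => ‖x‖ ^ (b * β - δ) * f x)
      ≤ lorentz μ r q₁ ((fun x => ‖x‖ ^ (-δ)) * F) := by
        refine lorentz_mono_ae r q₁ ?_
        filter_upwards [μ.ae_ne 0] with x hx
        exact (abs_rpow_mul_eq_abs_rpow_neg_mul (norm_pos_iff.2 hx) ha hb hab β δ (f x)).le
    _ ≤ 2 ^ r.toReal⁻¹ * (lorentz μ (finrank ℝ E / ENNReal.ofReal δ) ∞ (fun x => ‖x‖ ^ (-δ)) *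
          lorentz μ P q₁ F) :=
        lorentz_mul_le _ P ∞ q₁ hr_ne_zero (ne_zero_of_inv_eq_div_add_div hq₂ hq₃ hq₁)
    _ ≤ 2 ^ r.toReal⁻¹ * (μ (Metric.ball 0 1) ^ (δ / finrank ℝ E) * (2 ^ P.toReal⁻¹ *
          (lorentz μ p q₂ f ^ a * lorentz μ q q₃ (fun x => ‖x‖ ^ β * f x) ^ b))) := by
        gcongr
        · exact lorentz_norm_rpow_neg_le μ hδ
        · exact lorentz_rpow_mul_rpow_le ha hb hp hq hq₂ hq₃ (by rw [hP, inv_inv]) hq₁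
    _ = _ := by simp only [mul_assoc]

theorem stmt_13_general {p r q β γ a : ℝ} (hp1 : 1 < p) (hpn : p < finrank ℝ E) (hq : 0 < q)
    (ha0 : 0 ≤ a) (ha1 : a ≤ 1)
    (hbal : 1 / r + γ / (finrank ℝ E : ℝ) =
      a * (1 / p - 1 / (finrank ℝ E : ℝ)) + (1 - a) * (1 / q + β / (finrank ℝ E : ℝ)))
    {q₁ q₂ q₃ : ℝ≥0∞} (hq₂ : 1 ≤ q₂) (hq₃ : q₃ ≠ 0)
    (hqrel : 1 / q₁ = ENNReal.ofReal a / q₂ + ENNReal.ofReal (1 - a) / q₃)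
    (hδ0 : 0 ≤ -γ + (1 - a) * β) :
    ∃ C : ℝ, 0 < C ∧ ∀ f : E → ℝ, ContDiff ℝ 1 f → HasCompactSupport f →
      lorentz μ (ENNReal.ofReal r) q₁ (fun x => ‖x‖ ^ γ * f x) ≤
        ENNReal.ofReal C *
          lorentz μ (ENNReal.ofReal p) q₂ (fun x => ‖fderiv ℝ f x‖) ^ a *
          lorentz μ (ENNReal.ofReal q) q₃ (fun x => ‖x‖ ^ β * f x) ^ (1 - a) := by
  have hp_pos : 0 < p := one_pos.trans hp1
  have finrank_pos : 0 < (finrank ℝ E : ℝ) := hp_pos.trans hpn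
  have hs : 0 < p⁻¹ - (finrank ℝ E : ℝ)⁻¹ := sub_pos.2 (inv_strictAnti₀ hp_pos hpn)
  have : Nontrivial E := nontrivial_of_finrank_pos (R := ℝ) (Nat.cast_pos.1 finrank_pos)
  have ofReal_inv_r_eq := ofReal_inv_eq_of_inv_eq_add hδ0 finrank_pos ha0 (sub_nonneg.2 ha1)
    (add_sub_cancel a 1) (inv_pos.2 hs) hq (r := r)
    (by rw [div_inv_eq_mul]; linear_combination hbal)
  rw [ENNReal.ofReal_natCast] at ofReal_inv_r_eq
  obtain ⟨C₁, hC₁, interpolation⟩ := exists_lorentz_norm_rpow_mul_le μ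
    (by simpa using hs) (by simpa using hq) (one_pos.trans_le hq₂).ne' hq₃ ha0 (sub_nonneg.2 ha1)
    (add_sub_cancel a 1) hδ0 β ofReal_inv_r_eq (by rwa [← one_div])
  rw [show (1 - a) * β - (-γ + (1 - a) * β) = γ by ring] at interpolation
  obtain ⟨C₂, hC₂, sobolev⟩ := exists_lorentz_le_lorentz_fderiv μ hp1 hpn
  refine ⟨(C₁ * C₂ ^ a).toReal + 1, by positivity, fun f hf hf_supp => ?_⟩
  calc _ ≤ C₁ * ((C₂ * lorentz μ (ENNReal.ofReal p) q₂ fun x => ‖fderiv ℝ f x‖) ^ a *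
          lorentz μ (ENNReal.ofReal q) q₃ (fun x => ‖x‖ ^ β * f x) ^ (1 - a)) := by
        grw [interpolation f, sobolev q₂ hq₂ f hf hf_supp]
    _ = C₁ * C₂ ^ a * lorentz μ (ENNReal.ofReal p) q₂ (fun x => ‖fderiv ℝ f x‖) ^ a *
          lorentz μ (ENNReal.ofReal q) q₃ (fun x => ‖x‖ ^ β * f x) ^ (1 - a) := by
        rw [ENNReal.mul_rpow_of_nonneg _ _ ha0]
        ring
    _ ≤ _ := by
        gcongr
        rw [ENNReal.le_ofReal_iff_toReal_le (by finiteness) (by positivity)]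
        exact (lt_add_one _).le

end CaffarelliKohnNirenberg

/-- Theorem 2.1 of the paper in the Euclidean case: Caffarelli–Kohn–Nirenberg
inequalities in Lorentz norms, with unweighted gradient term. -/
theorem stmt_13 (n : ℕ) (hn : 2 ≤ n) (p r q β γ a : ℝ)
    (hp1 : 1 < p) (hpn : p < n) (hr : 1 ≤ r) (hq : 1 ≤ q)
    (ha0 : 0 < a) (ha1 : a ≤ 1)
    (hbal : 1 / r + γ / (n : ℝ) =
      a * (1 / p - 1 / (n : ℝ)) + (1 - a) * (1 / q + β / (n : ℝ)))
    (q₁ q₂ q₃ : ℝ≥0∞) (hq₁ : 1 ≤ q₁) (hq₂ : 1 ≤ q₂) (hq₃ : 1 ≤ q₃)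
    (hqrel : 1 / q₁ = ENNReal.ofReal a / q₂ + ENNReal.ofReal (1 - a) / q₃)
    (hδ0 : 0 ≤ -γ + (1 - a) * β) (hδa : -γ + (1 - a) * β ≤ a) :
    ∃ C : ℝ, 0 < C ∧ ∀ f : EuclideanSpace ℝ (Fin n) → ℝ,
      ContDiff ℝ (⊤ : ℕ∞) f → HasCompactSupport f →
      lorentz volume (ENNReal.ofReal r) q₁ (fun x => ‖x‖ ^ γ * f x) ≤
        ENNReal.ofReal C *
          lorentz volume (ENNReal.ofReal p) q₂ (fun x => ‖gradient f x‖) ^ a *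
          lorentz volume (ENNReal.ofReal q) q₃ (fun x => ‖x‖ ^ β * f x) ^ (1 - a) := by
  rw [← finrank_euclideanSpace_fin (𝕜 := ℝ) (n := n)] at hpn hbal
  obtain ⟨C, hC, bound⟩ := stmt_13_general volume hp1 hpn (one_pos.trans_le hq) ha0.le ha1 hbal
    hq₂ (one_pos.trans_le hq₃).ne' hqrel hδ0
  refine ⟨C, hC, fun f hf hf_supp => ?_⟩
  simpa only [gradient, LinearIsometryEquiv.norm_map] using
    bound f (hf.of_le (by exact_mod_cast le_top)) hf_supp
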